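/- The derivation module D(𝒜₂₄₁) of the central hyperplane arrangement 𝒜₂₄₁ in ℂ⁴ with defining equation Q₂₄₁ = x·y·z·w·(x+y+z+w)·(x+y−z−w)·(y−z+w)·(x+z−w) is not a free module over S = ℂ[x,y,z,w]. -/

import Mathlib

open MvPolynomial

noncomputable section

/-- The polynomial ring `S = ℂ[x,y,z,w]`, with `x = X 0`, `y = X 1`, `z = X 2`, `w = X 3`. -/
abbrev S4 : Type := MvPolynomial (Fin 4) ℂ

/-- The linear form `c₀·x + c₁·y + c₂·z + c₃·w` with coefficient vector `c`. -/
noncomputable def linForm (c : Fin 4 → ℂ) : S4 := ∑ i, C (c i) * X i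

/-- A polynomial derivation `θ = a₁∂ₓ + a₂∂_y + a₃∂_z + a₄∂_w` of `S` is identified with
its coefficient tuple `a : Fin 4 → S`; the linear map `derMap f` sends `a` to `θ(f)`. -/
noncomputable def derMap (f : S4) : (Fin 4 → S4) →ₗ[S4] S4 where
  toFun a := ∑ i, a i * pderiv i f
  map_add' a b := by simp [add_mul, Finset.sum_add_distrib]
  map_smul' c a := by simp [Finset.mul_sum, mul_assoc]

/-- The derivation module `D(𝒜)` of the central arrangement whose hyperplanes are the kernels
of the linear forms `linForm (α H)`: all derivations `θ` with `θ(α_H) ∈ S·α_H` for every `H`. -/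
noncomputable def derivModule {ι : Type} (α : ι → (Fin 4 → ℂ)) :
    Submodule S4 (Fin 4 → S4) :=
  ⨅ H, Submodule.comap (derMap (linForm (α H))) (Ideal.span {linForm (α H)})

end

/-- The coefficient vectors of the eight linear factors of Q = xyzw(x+y+z+w)(x+y-z-w)(y-z+w)(x+z-w), defining the rigid Cynk–Szemberg octic arrangement 𝒜₂₄₁ ⊂ ℙ³. -/
noncomputable def A241 : Fin 8 → (Fin 4 → ℂ) :=
  ![![1, 0, 0, 0],
    ![0, 1, 0, 0],
    ![0, 0, 1, 0],
    ![0, 0, 0, 1],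
    ![1, 1, 1, 1],
    ![1, 1, -1, -1],
    ![0, 1, -1, 1],
    ![1, 0, 1, -1]]

/-! At `P = (1, 0, 0, 0)` exactly four planes of the arrangement meet, those of `y`, `z`, `w` and
`y - z + w`, and any three of these forms are independent. Near such a point `D(𝒜)` needs five
generators: the constant field along `P`, the Euler field and three quadratic fields. Their classes
in the fibre of `D(𝒜)` at `P` are independent, whereas a free submodule of `S⁴` has fibres of
dimension at most four. -/

theorem card_le_finrank_of_linearIndependent_semilinear {R k M V κ : Type*} [CommRing R]
    [CommRing k] [Nontrivial k] [AddCommGroup M] [Module R M] [Module.Free R M] [Module.Finite R M]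
    [AddCommGroup V] [Module k V] [Fintype κ] {σ : R →+* k} (φ : M →ₛₗ[σ] V) {x : κ → M}
    (hx : LinearIndependent k (φ ∘ x)) : Fintype.card κ ≤ Module.finrank R M := by
  classical
  have : Nontrivial R := σ.domain_nontrivial
  let b := Module.finBasis R M
  have hspan : Set.range (φ ∘ x) ≤ Submodule.span k (Set.range (φ ∘ b)) := by
    rintro _ ⟨i, rfl⟩
    rw [Function.comp_apply, ← b.sum_repr (x i), map_sum]
    refine Submodule.sum_mem _ fun j _ => ?_
    rw [map_smulₛₗ]
    exact Submodule.smul_mem _ _ (Submodule.subset_span ⟨j, rfl⟩)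
  have hcard := linearIndependent_le_span' _ hx _ hspan
  rw [Cardinal.mk_fintype, Nat.cast_le] at hcard
  simpa using hcard.trans (Fintype.card_range_le (φ ∘ b))

theorem eval_linForm (c P : Fin 4 → ℂ) : eval P (linForm c) = c ⬝ᵥ P := by
  simp [linForm, dotProduct]

theorem linForm_ne_zero_of_dotProduct_ne_zero {c v : Fin 4 → ℂ} (h : c ⬝ᵥ v ≠ 0) :
    linForm c ≠ 0 := by
  intro hc
  simp [← eval_linForm, hc] at h

theorem derMap_linForm (c : Fin 4 → ℂ) (a : Fin 4 → S4) :
    derMap (linForm c) a = ∑ i, C (c i) * a i := by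
  simp [derMap, linForm, pderiv_X, Pi.single_apply, mul_comm]

theorem derMap_linForm_X (c : Fin 4 → ℂ) : derMap (linForm c) X = linForm c :=
  derMap_linForm c X

theorem derMap_linForm_C (c v : Fin 4 → ℂ) :
    derMap (linForm c) (fun i => C (v i)) = C (c ⬝ᵥ v) := by
  simp [derMap_linForm, dotProduct]

theorem derMap_linForm_sum_smul {κ : Type*} [Fintype κ] (c : κ → ℂ) (y : κ → Fin 4 → ℂ)
    (a : Fin 4 → S4) :
    derMap (linForm (∑ k, c k • y k)) a = ∑ k, C (c k) * derMap (linForm (y k)) a := by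
  simp only [derMap_linForm, Finset.sum_apply, Pi.smul_apply, smul_eq_mul, map_sum, map_mul,
    Finset.sum_mul, Finset.mul_sum, mul_assoc]
  exact Finset.sum_comm

/-- The derivative in the constant direction `v`. -/
noncomputable def dirDeriv (v : Fin 4 → ℂ) : Derivation ℂ S4 S4 :=
  mkDerivation ℂ fun i => C (v i)

theorem dirDeriv_linForm (v c : Fin 4 → ℂ) : dirDeriv v (linForm c) = C (c ⬝ᵥ v) := by
  simp [dirDeriv, linForm, dotProduct, mkDerivation_X]

theorem eval_derivation_mul_of_eval_eq_zero {σ R : Type*} [CommSemiring R]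
    (D : Derivation R (MvPolynomial σ R) (MvPolynomial σ R)) {P : σ → R} {f : MvPolynomial σ R}
    (hf : eval P f = 0) (g : MvPolynomial σ R) :
    eval P (D (g * f)) = eval P g * eval P (D f) := by
  simp [Derivation.leibniz, hf]

section Arrangement

variable {ι κ : Type} {α : ι → Fin 4 → ℂ}

theorem mem_derivModule_iff {a : Fin 4 → S4} :
    a ∈ derivModule α ↔ ∀ H, linForm (α H) ∣ derMap (linForm (α H)) a := by
  simp [derivModule, Submodule.mem_iInf, Ideal.mem_span_singleton]

theorem derivModule_le_comp (e : κ → ι) : derivModule α ≤ derivModule (α ∘ e) :=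
  fun _ ha => mem_derivModule_iff.2 fun j => mem_derivModule_iff.1 ha (e j)

theorem finrank_derivModule_le : Module.finrank S4 (derivModule α) ≤ 4 := by
  simpa using (derivModule α).finrank_le

theorem exists_smul_mem_derivModule [Finite ι] {P : Fin 4 → ℂ} {e : κ → ι}
    (he : ∀ H, α H ⬝ᵥ P = 0 → H ∈ Set.range e) :
    ∃ g : S4, eval P g ≠ 0 ∧ ∀ a ∈ derivModule (α ∘ e), g • a ∈ derivModule α := by
  classical
  have := Fintype.ofFinite ι
  refine ⟨∏ H with α H ⬝ᵥ P ≠ 0, linForm (α H), ?_, fun a ha => mem_derivModule_iff.2 fun H => ?_⟩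
  · rw [map_prod, Finset.prod_ne_zero_iff]
    intro H hH
    simpa [eval_linForm] using hH
  · rw [map_smul, smul_eq_mul]
    by_cases hH : α H ⬝ᵥ P = 0
    · obtain ⟨j, rfl⟩ := he H hH
      exact (mem_derivModule_iff.1 ha j).mul_left _
    · exact (Finset.dvd_prod_of_mem (fun H => linForm (α H)) (by simpa using hH)).mul_right _

theorem card_le_four_of_free_derivModule [Finite ι] [Module.Free S4 (derivModule α)]
    {P : Fin 4 → ℂ} {e : κ → ι} (he : ∀ H, α H ⬝ᵥ P = 0 → H ∈ Set.range e)
    {V : Type*} [AddCommGroup V] [Module ℂ V] (φ : derivModule (α ∘ e) →ₛₗ[eval P] V)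
    {τ : Type*} [Fintype τ] {x : τ → derivModule (α ∘ e)} (hx : LinearIndependent ℂ (φ ∘ x)) :
    Fintype.card τ ≤ 4 := by
  obtain ⟨g, hgP, hg⟩ := exists_smul_mem_derivModule he
  let gx (i : τ) : derivModule α := ⟨g • x i, hg _ (x i).2⟩
  let ψ : derivModule α →ₛₗ[eval P] V := φ.comp (Submodule.inclusion (derivModule_le_comp e))
  have hψ : ψ ∘ gx = fun i => eval P g • φ (x i) := funext fun i => φ.map_smulₛₗ g (x i)
  have hgx : LinearIndependent ℂ (ψ ∘ gx) := by
    rw [hψ]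
    exact hx.units_smul fun _ => Units.mk0 _ hgP
  exact (card_le_finrank_of_linearIndependent_semilinear ψ hgx).trans finrank_derivModule_le

/-- The logarithmic coefficient `θ ↦ θ(α_H) / α_H` at the hyperplane `H`. -/
noncomputable def logCoeff (hα : ∀ H, linForm (α H) ≠ 0) (H : ι) : derivModule α →ₗ[S4] S4 :=
  (LinearEquiv.toSpanNonzeroSingleton S4 S4 (linForm (α H)) (hα H)).symm.toLinearMap ∘ₗ
    (derMap (linForm (α H))).restrict (q := Ideal.span {linForm (α H)})
      fun _ ha => (Submodule.mem_iInf _).1 ha H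

theorem linForm_mul_logCoeff (hα : ∀ H, linForm (α H) ≠ 0) (H : ι) (θ : derivModule α) :
    linForm (α H) * logCoeff hα H θ = derMap (linForm (α H)) θ := by
  rw [mul_comm]
  exact LinearEquiv.toSpanNonzeroSingleton_symm_apply_smul S4 S4 _ (hα H) _

theorem logCoeff_eq (hα : ∀ H, linForm (α H) ≠ 0) {H : ι} {θ : derivModule α} {f : S4}
    (h : derMap (linForm (α H)) θ = linForm (α H) * f) : logCoeff hα H θ = f :=
  mul_left_cancel₀ (hα H) ((linForm_mul_logCoeff hα H θ).trans h)

end Arrangement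

/-- Four planes in general position through the point `P` of `ℙ³`: three forms `β (some k)`,
whose independence is witnessed by the dual vectors, and a fourth form `β none` which is a
combination of them with nonzero coefficients. -/
structure GenericQuadruple (β : Option (Fin 3) → Fin 4 → ℂ) (P : Fin 4 → ℂ) where
  coeff : Fin 3 → ℂ
  coeff_ne_zero : ∀ k, coeff k ≠ 0
  none_eq_sum : β none = ∑ k, coeff k • β (some k)
  dual : Fin 3 → Fin 4 → ℂ
  dotProduct_dual : ∀ j k, β (some j) ⬝ᵥ dual k = if j = k then 1 else 0
  point_ne_zero : P ≠ 0
  some_dotProduct_point : ∀ k, β (some k) ⬝ᵥ P = 0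

namespace GenericQuadruple

variable {β : Option (Fin 3) → Fin 4 → ℂ} {P : Fin 4 → ℂ} (q : GenericQuadruple β P)

include q

theorem dotProduct_point (o : Option (Fin 3)) : β o ⬝ᵥ P = 0 := by
  cases o with
  | none => simp [q.none_eq_sum, sum_dotProduct, q.some_dotProduct_point]
  | some k => exact q.some_dotProduct_point k

theorem eval_linForm_eq_zero (o : Option (Fin 3)) : eval P (linForm (β o)) = 0 := by
  rw [eval_linForm, q.dotProduct_point]

theorem none_dotProduct_dual (k : Fin 3) : β none ⬝ᵥ q.dual k = q.coeff k := by
  simp [q.none_eq_sum, sum_dotProduct, q.dotProduct_dual]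

theorem linForm_ne_zero (o : Option (Fin 3)) : linForm (β o) ≠ 0 := by
  cases o with
  | none =>
    refine linForm_ne_zero_of_dotProduct_ne_zero (v := q.dual 0) ?_
    rw [q.none_dotProduct_dual]
    exact q.coeff_ne_zero 0
  | some k =>
    refine linForm_ne_zero_of_dotProduct_ne_zero (v := q.dual k) ?_
    simp [q.dotProduct_dual]

theorem eval_dirDeriv_linForm_mul (o : Option (Fin 3)) (v : Fin 4 → ℂ) (f : S4) :
    eval P (dirDeriv v (linForm (β o) * f)) = (β o ⬝ᵥ v) * eval P f := by
  rw [mul_comm, eval_derivation_mul_of_eval_eq_zero _ (q.eval_linForm_eq_zero o), dirDeriv_linForm,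
    eval_C, mul_comm]

theorem eval_logCoeff_some (k : Fin 3) (θ : derivModule β) :
    eval P (logCoeff q.linForm_ne_zero (some k) θ) =
      eval P (logCoeff q.linForm_ne_zero none θ) := by
  have hrel : linForm (β none) * logCoeff q.linForm_ne_zero none θ =
      ∑ j, C (q.coeff j) * (linForm (β (some j)) * logCoeff q.linForm_ne_zero (some j) θ) := by
    simp only [linForm_mul_logCoeff]
    rw [q.none_eq_sum, derMap_linForm_sum_smul]
  have hderiv := congrArg (fun f => eval P (dirDeriv (q.dual k) f)) hrel
  simp only [map_sum, ← smul_eq_C_mul, Derivation.map_smul, smul_eval, q.eval_dirDeriv_linForm_mul,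
    q.none_dotProduct_dual, q.dotProduct_dual, ite_mul, one_mul, zero_mul, mul_ite, mul_zero,
    Finset.sum_ite_eq', Finset.mem_univ, if_true] at hderiv
  exact (mul_left_cancel₀ (q.coeff_ne_zero k) hderiv).symm

/-- Coordinates on the fibre of `D(β)` at `P`: the value at `P`, the common value of the logarithmic
coefficients at `P`, and three first derivatives at `P` of differences of logarithmic coefficients.
The last are linear over evaluation at `P` because the differences vanish there. -/
noncomputable def fiberMap : derivModule β →ₛₗ[eval P] (Fin 4 → ℂ) × ℂ × (Fin 3 → ℂ) where
  toFun θ := (fun i => eval P (θ.1 i), eval P (logCoeff q.linForm_ne_zero none θ),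
    fun k => eval P (dirDeriv (q.dual (k + 2))
      (logCoeff q.linForm_ne_zero (some (k + 1)) θ - logCoeff q.linForm_ne_zero none θ)))
  map_add' θ η := by
    ext <;> simp [add_sub_add_comm]
  map_smul' g θ := by
    ext k
    · simp
    · simp
    · have h0 : eval P (logCoeff q.linForm_ne_zero (some (k + 1)) θ -
          logCoeff q.linForm_ne_zero none θ) = 0 := by
        rw [map_sub, q.eval_logCoeff_some, sub_self]
      simp only [map_smul, smul_eq_mul, ← mul_sub, eval_derivation_mul_of_eval_eq_zero _ h0,
        Prod.smul_mk, Pi.smul_apply]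

theorem fiberMap_eq {a : Fin 4 → S4} (ha : a ∈ derivModule β) {χ : Option (Fin 3) → S4}
    (h : ∀ o, derMap (linForm (β o)) a = linForm (β o) * χ o) :
    q.fiberMap ⟨a, ha⟩ = (fun i => eval P (a i), eval P (χ none),
      fun k => eval P (dirDeriv (q.dual (k + 2)) (χ (some (k + 1)) - χ none))) := by
  have hχ (o) : logCoeff q.linForm_ne_zero o ⟨a, ha⟩ = χ o := logCoeff_eq _ (h o)
  simp [fiberMap, hχ]

theorem derMap_linForm_point (o : Option (Fin 3)) :
    derMap (linForm (β o)) (fun i => C (P i)) = linForm (β o) * 0 := by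
  rw [derMap_linForm_C, q.dotProduct_point, map_zero, mul_zero]

/-- The derivation `y_{k+1} y_{k+2} (∂_{k+1} / c_{k+1} - ∂_{k+2} / c_{k+2})`, indices modulo `3`,
where `y_j` is the form `β (some j)`, `∂_j` the derivative along the dual vector and `c_j` the
coefficient of `y_j` in `β none`. It annihilates `β none` and `y_k`. -/
noncomputable def quadraticField (k : Fin 3) : Fin 4 → S4 :=
  (linForm (β (some (k + 1))) * linForm (β (some (k + 2)))) • fun i =>
    C (((q.coeff (k + 1))⁻¹ • q.dual (k + 1) - (q.coeff (k + 2))⁻¹ • q.dual (k + 2)) i)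

/-- The logarithmic coefficients of `quadraticField k`. -/
noncomputable def quadraticLogCoeff (k : Fin 3) (o : Option (Fin 3)) : S4 :=
  o.elim 0 (Pi.single (k + 1) (C (q.coeff (k + 1))⁻¹ * linForm (β (some (k + 2)))) -
    Pi.single (k + 2) (C (q.coeff (k + 2))⁻¹ * linForm (β (some (k + 1)))))

theorem derMap_linForm_quadraticField (k : Fin 3) (o : Option (Fin 3)) :
    derMap (linForm (β o)) (q.quadraticField k) = linForm (β o) * q.quadraticLogCoeff k o := by
  have hk : k + 1 ≠ k + 2 := by decide +revert
  rw [quadraticField, map_smul, derMap_linForm_C, smul_eq_mul, dotProduct_sub, dotProduct_smul,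
    dotProduct_smul]
  cases o with
  | none => simp [quadraticLogCoeff, q.none_dotProduct_dual, q.coeff_ne_zero]
  | some j =>
    rw [q.dotProduct_dual, q.dotProduct_dual]
    rcases eq_or_ne j (k + 1) with rfl | h₁
    · simp only [quadraticLogCoeff, Option.elim_some, Pi.sub_apply, Pi.single_eq_same,
        Pi.single_eq_of_ne hk, if_neg hk, if_true, smul_eq_mul, mul_one, mul_zero, sub_zero]
      ring
    · rcases eq_or_ne j (k + 2) with rfl | h₂
      · simp only [quadraticLogCoeff, Option.elim_some, Pi.sub_apply, Pi.single_eq_same,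
          Pi.single_eq_of_ne hk.symm, if_neg hk.symm, if_true, smul_eq_mul, mul_one, mul_zero,
          zero_sub, map_neg]
        ring
      · simp [quadraticLogCoeff, h₁, h₂]

/-- Five elements of `D(β)` with independent classes in the fibre at `P`. -/
noncomputable def generator : Option (Option (Fin 3)) → derivModule β
  | none => ⟨fun i => C (P i), mem_derivModule_iff.2 fun o => ⟨_, q.derMap_linForm_point o⟩⟩
  | some none => ⟨X, mem_derivModule_iff.2 fun o => (derMap_linForm_X (β o)).symm.dvd⟩
  | some (some k) =>
    ⟨q.quadraticField k, mem_derivModule_iff.2 fun o => ⟨_, q.derMap_linForm_quadraticField k o⟩⟩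

theorem fiberMap_generator_point : q.fiberMap (q.generator none) = (P, 0, 0) := by
  rw [generator, q.fiberMap_eq (χ := 0) _ q.derMap_linForm_point]
  ext <;> simp

theorem fiberMap_generator_euler : q.fiberMap (q.generator (some none)) = (P, 1, 0) := by
  rw [generator, q.fiberMap_eq (χ := 1) _ fun o => (derMap_linForm_X (β o)).trans (mul_one _).symm]
  ext <;> simp

theorem fiberMap_generator_quadratic (k : Fin 3) :
    q.fiberMap (q.generator (some (some k))) = (0, 0, Pi.single k (q.coeff (k + 1))⁻¹) := by
  rw [generator, q.fiberMap_eq _ (q.derMap_linForm_quadraticField k)]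
  ext m
  · simp [quadraticField, q.eval_linForm_eq_zero]
  · simp [quadraticLogCoeff]
  · fin_cases k <;> fin_cases m <;>
      simp [quadraticLogCoeff, Derivation.leibniz, derivation_C, dirDeriv_linForm,
        q.dotProduct_dual]

theorem linearIndependent_fiberMap_generator :
    LinearIndependent ℂ (q.fiberMap ∘ q.generator) := by
  rw [Fintype.linearIndependent_iff]
  intro t ht
  simp only [Function.comp_apply, Fintype.sum_option, q.fiberMap_generator_point,
    q.fiberMap_generator_euler, q.fiberMap_generator_quadratic, Prod.ext_iff] at ht
  obtain ⟨hpoint, heuler, hquadratic⟩ := ht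
  have hq (k : Fin 3) : t (some (some k)) = 0 := by
    simpa [Prod.snd_sum, Finset.sum_apply, Pi.single_apply, q.coeff_ne_zero] using
      congrFun hquadratic k
  have he : t (some none) = 0 := by simpa [hq] using heuler
  have hp : t none = 0 := by simpa [hq, he, q.point_ne_zero] using hpoint
  rintro (_ | _ | k)
  exacts [hp, he, hq k]

end GenericQuadruple

theorem not_free_derivModule_of_genericQuadruple {ι : Type} [Finite ι] {α : ι → Fin 4 → ℂ}
    {P : Fin 4 → ℂ} {e : Option (Fin 3) → ι} (q : GenericQuadruple (α ∘ e) P)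
    (he : ∀ H, α H ⬝ᵥ P = 0 → H ∈ Set.range e) : ¬ Module.Free S4 (derivModule α) := by
  intro
  have hcard := card_le_four_of_free_derivModule he q.fiberMap
    q.linearIndependent_fiberMap_generator
  simp at hcard

/-- The four planes `y`, `z`, `w` and `y - z + w` of 𝒜₂₄₁ through `(1, 0, 0, 0)`. -/
noncomputable def genericQuadrupleA241 :
    GenericQuadruple (A241 ∘ fun o => o.elim 6 ![1, 2, 3]) ![1, 0, 0, 0] where
  coeff := ![1, -1, 1]
  coeff_ne_zero := by simp [Fin.forall_fin_succ]
  none_eq_sum := by simp [A241, Fin.sum_univ_succ]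
  dual := ![![0, 1, 0, 0], ![0, 0, 1, 0], ![0, 0, 0, 1]]
  dotProduct_dual := by simp [A241, Fin.forall_fin_succ]
  point_ne_zero := by simp
  some_dotProduct_point := by simp [A241, Fin.forall_fin_succ]

/-- The derivation module of 𝒜₂₄₁ is not a free `S`-module. -/
theorem not_free_A241 : ¬ Module.Free S4 ↥(derivModule A241) := by
  refine not_free_derivModule_of_genericQuadruple genericQuadrupleA241 ?_
  simp [A241, Fin.forall_fin_succ, Option.exists, Fin.exists_fin_succ]
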